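/- arXiv:1510.06460 — 4 statements merged into one kernel-verified Lean document; each statement's English description precedes it below -/
import Mathlib

section
/- The operator H is a contraction with modulus γ in the sup norm: for all q₁, q₂ : S → Act → ℝ, ‖H q₁ − H q₂‖∞ ≤ γ · ‖q₁ − q₂‖∞. (This is Proposition 3 of the paper, stating that the Bellman-type operator associated with maximizing expected STL robustness for formulas F_{[0,T)}ψ is a contraction mapping.) -/
/-!
Each operation composing `H` is controlled in the sup norm: maximizing over a finite set and taking
`max (r σ) ·` are `1`-Lipschitz, multiplication by `γ` scales distances by `γ`, and averaging
against a probability vector does not increase the sup norm. Hence the composite is `γ`-Lipschitz.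
-/

/-- Maximization over a finite nonempty set is `1`-Lipschitz for the sup norm. -/
lemma abs_ciSup_sub_ciSup_le {A : Type*} [Finite A] [Nonempty A] (f g : A → ℝ) (D : ℝ)
    (h : ∀ b, |f b - g b| ≤ D) : |(⨆ b, f b) - ⨆ b, g b| ≤ D := by
  have key : ∀ u v : A → ℝ, (∀ b, u b - v b ≤ D) → (⨆ b, u b) ≤ D + ⨆ b, v b := fun u v huv =>
    ciSup_le fun b => by linarith [huv b, le_ciSup (Set.finite_range v).bddAbove b]
  have h₁ := key f g fun b => (abs_le.1 (h b)).2
  have h₂ := key g f fun b => by linarith [(abs_le.1 (h b)).1]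
  rw [abs_le]
  constructor <;> linarith

/-- Proposition 3: the Bellman-type operator `H` associated with maximizing
expected STL robustness for formulas `F_[0,T) ψ` is a `γ`-contraction in the
sup norm. -/
theorem stmt_0 {S Act : Type*} [Fintype S] [Fintype Act] [Nonempty S] [Nonempty Act]
    (P : S → Act → S → ℝ)
    (hP0 : ∀ σ a σ', 0 ≤ P σ a σ')
    (hP1 : ∀ σ a, ∑ σ', P σ a σ' = 1)
    (r : S → ℝ) (γ : ℝ) (hγ0 : 0 < γ) (hγ1 : γ < 1)
    (H : (S → Act → ℝ) → S → Act → ℝ)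
    (hH : ∀ q σ a, H q σ a = ∑ σ', P σ a σ' * max (r σ) (γ * ⨆ b, q σ' b))
    (q₁ q₂ : S → Act → ℝ) :
    (⨆ p : S × Act, |H q₁ p.1 p.2 - H q₂ p.1 p.2|) ≤
      γ * ⨆ p : S × Act, |q₁ p.1 p.2 - q₂ p.1 p.2| := by
  set D := ⨆ p : S × Act, |q₁ p.1 p.2 - q₂ p.1 p.2| with hD
  have hle : ∀ σ b, |q₁ σ b - q₂ σ b| ≤ D := fun σ b =>
    le_ciSup (f := fun p : S × Act => |q₁ p.1 p.2 - q₂ p.1 p.2|)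
      (Set.finite_range _).bddAbove (σ, b)
  have hmax : ∀ σ σ', |max (r σ) (γ * ⨆ b, q₁ σ' b) - max (r σ) (γ * ⨆ b, q₂ σ' b)| ≤ γ * D := by
    intro σ σ'
    have hsup := abs_ciSup_sub_ciSup_le (q₁ σ') (q₂ σ') D (hle σ')
    have hD0 : 0 ≤ D := (abs_nonneg _).trans hsup
    refine (abs_max_sub_max_le_max _ _ _ _).trans (max_le ?_ ?_)
    · simpa using mul_nonneg hγ0.le hD0
    · rw [← mul_sub, abs_mul, abs_of_pos hγ0]
      gcongr
  refine ciSup_le fun ⟨σ, a⟩ => ?_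
  simp only [hH, ← Finset.sum_sub_distrib, ← mul_sub]
  calc _ ≤ ∑ σ', |P σ a σ' * (max (r σ) (γ * ⨆ b, q₁ σ' b) - max (r σ) (γ * ⨆ b, q₂ σ' b))| :=
        Finset.abs_sum_le_sum_abs _ _
    _ ≤ ∑ σ', P σ a σ' * (γ * D) := Finset.sum_le_sum fun σ' _ => by
        rw [abs_mul, abs_of_nonneg (hP0 σ a σ')]
        exact mul_le_mul_of_nonneg_left (hmax σ σ') (hP0 σ a σ')
    _ = γ * D := by rw [← Finset.sum_mul, hP1, one_mul]
end

section
/- The operator H has a unique fixed point: there exists exactly one function Q* : S → Act → ℝ such that H Q* = Q*. (This is the paper's characterization of the optimal Q-function Q* as the unique fixed point of the contraction H, combining Proposition 3 with completeness of the finite-dimensional function space under the sup norm.) -/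
/-!
`H` is a `γ`-contraction for the sup distance on `S → Act → ℝ` (which is the distance of the
pi type, iterated), so Banach's fixed point theorem applies. The maximum over actions and
`max (r σ) ·` are nonexpansive, multiplication by `γ` contributes the factor `γ`, and averaging
against the probability weights `P σ a ·` does not increase the bound.
-/

/-- The maximum over a finite nonempty type is nonexpansive (one-sided form). -/
lemma ciSup_le_ciSup_add_dist {Act : Type*} [Fintype Act] [Nonempty Act] (f g : Act → ℝ) :
    ⨆ b, f b ≤ (⨆ b, g b) + dist f g := by
  refine ciSup_le fun b => ?_
  have h1 : g b ≤ ⨆ b, g b := le_ciSup (Set.finite_range g).bddAbove b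
  have h2 : |f b - g b| ≤ dist f g := by
    rw [← Real.dist_eq]; exact dist_le_pi_dist f g b
  linarith [le_abs_self (f b - g b)]

lemma abs_ciSup_sub_ciSup_le_dist {Act : Type*} [Fintype Act] [Nonempty Act] (f g : Act → ℝ) :
    |(⨆ b, f b) - ⨆ b, g b| ≤ dist f g := by
  have h1 := ciSup_le_ciSup_add_dist f g
  have h2 := ciSup_le_ciSup_add_dist g f
  rw [dist_comm] at h2
  exact abs_sub_le_iff.2 ⟨by linarith, by linarith⟩

/-- The optimal Q-function `Q*` is the unique fixed point of the contraction `H`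
(Proposition 3 plus completeness of the sup-norm function space). -/
theorem stmt_3 {S Act : Type*} [Fintype S] [Fintype Act] [Nonempty S] [Nonempty Act]
    (P : S → Act → S → ℝ)
    (hP0 : ∀ σ a σ', 0 ≤ P σ a σ')
    (hP1 : ∀ σ a, ∑ σ', P σ a σ' = 1)
    (r : S → ℝ) (γ : ℝ) (hγ0 : 0 < γ) (hγ1 : γ < 1)
    (H : (S → Act → ℝ) → S → Act → ℝ)
    (hH : ∀ q σ a, H q σ a = ∑ σ', P σ a σ' * max (r σ) (γ * ⨆ b, q σ' b)) :
    ∃! Qstar : S → Act → ℝ, H Qstar = Qstar := by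
  have hlip : LipschitzWith ⟨γ, hγ0.le⟩ H := by
    refine LipschitzWith.of_dist_le_mul fun p q => ?_
    change dist (H p) (H q) ≤ γ * dist p q
    have hnn : 0 ≤ γ * dist p q := mul_nonneg hγ0.le dist_nonneg
    refine (dist_pi_le_iff hnn).2 fun σ => (dist_pi_le_iff hnn).2 fun a => ?_
    rw [Real.dist_eq, hH, hH, ← Finset.sum_sub_distrib]
    calc |∑ σ', (P σ a σ' * max (r σ) (γ * ⨆ b, p σ' b)
            - P σ a σ' * max (r σ) (γ * ⨆ b, q σ' b))|
        ≤ ∑ σ', P σ a σ' * (γ * dist p q) := by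
          refine (Finset.abs_sum_le_sum_abs _ _).trans (Finset.sum_le_sum fun σ' _ => ?_)
          rw [← mul_sub, abs_mul, abs_of_nonneg (hP0 σ a σ')]
          refine mul_le_mul_of_nonneg_left ?_ (hP0 σ a σ')
          calc |max (r σ) (γ * ⨆ b, p σ' b) - max (r σ) (γ * ⨆ b, q σ' b)|
              ≤ |γ * (⨆ b, p σ' b) - γ * ⨆ b, q σ' b| := by
                rw [max_comm (r σ), max_comm (r σ)]
                exact abs_max_sub_max_le_abs _ _ _
            _ = γ * |(⨆ b, p σ' b) - ⨆ b, q σ' b| := by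
                rw [← mul_sub, abs_mul, abs_of_pos hγ0]
            _ ≤ γ * dist p q := by
                refine mul_le_mul_of_nonneg_left ?_ hγ0.le
                exact (abs_ciSup_sub_ciSup_le_dist _ _).trans (dist_le_pi_dist p q σ')
      _ = γ * dist p q := by rw [← Finset.sum_mul, hP1, one_mul]
  have hc : ContractingWith ⟨γ, hγ0.le⟩ H := ⟨NNReal.coe_lt_coe.1 hγ1, hlip⟩
  exact ⟨ContractingWith.fixedPoint H hc, hc.fixedPoint_isFixedPt,
    fun q hq => hc.fixedPoint_unique hq⟩
end

section
/- If α : ℕ → ℝ satisfies 0 ≤ α_k ≤ 1 for all k and ∑_{k=0}^∞ α_k = ∞ (the series diverges), and the sequence (x_k) in E is defined from an arbitrary x₀ ∈ E by x_{k+1} = (1−α_k)·x_k + α_k·H(x_k), then x_k converges to q*. (This is the noise-free core of Proposition 2: the Q-learning update rule with step sizes satisfying ∑ α_k = ∞ converges to the optimal Q-function, the fixed point of the contraction H.) -/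
/-!
The error `‖x k - q*‖` contracts by the factor `1 - (1 - γ) α k ≤ exp (-(1 - γ) α k)` at each step,
because `x (k + 1) - q*` is a convex combination of `x k - q*` and `H (x k) - H q*`. Multiplying
these factors bounds the error by `exp (-(1 - γ) ∑ α) * ‖x 0 - q*‖`, which tends to zero since
the step sizes have divergent sum.
-/

/-- Noise-free core of Proposition 2: the Q-learning iterates
`x_{k+1} = (1−α_k)·x_k + α_k·H(x_k)` with step sizes `0 ≤ α_k ≤ 1` and
`∑ α_k = ∞` converge to the fixed point `q*` of the contraction `H`. -/
theorem stmt_5 {E : Type*} [NormedAddCommGroup E] [NormedSpace ℝ E]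
    (γ : ℝ) (hγ0 : 0 < γ) (hγ1 : γ < 1)
    (H : E → E) (hH : ∀ x y : E, ‖H x - H y‖ ≤ γ * ‖x - y‖)
    (qstar : E) (hq : H qstar = qstar)
    (α : ℕ → ℝ) (hα0 : ∀ k, 0 ≤ α k) (hα1 : ∀ k, α k ≤ 1)
    (hdiv : Filter.Tendsto (fun n => ∑ k ∈ Finset.range n, α k) Filter.atTop Filter.atTop)
    (x : ℕ → E)
    (hx : ∀ k, x (k + 1) = (1 - α k) • x k + α k • H (x k)) :
    Filter.Tendsto x Filter.atTop (nhds qstar) := by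
  have step : ∀ k, ‖x (k + 1) - qstar‖ ≤ Real.exp (-((1 - γ) * α k)) * ‖x k - qstar‖ := by
    intro k
    have e : x (k + 1) - qstar = (1 - α k) • (x k - qstar) + α k • (H (x k) - H qstar) := by
      rw [hx, hq]
      module
    calc ‖x (k + 1) - qstar‖
        ≤ ‖(1 - α k) • (x k - qstar)‖ + ‖α k • (H (x k) - H qstar)‖ := by
          rw [e]
          exact norm_add_le _ _
      _ = (1 - α k) * ‖x k - qstar‖ + α k * ‖H (x k) - H qstar‖ := by
          rw [norm_smul_of_nonneg (sub_nonneg.2 (hα1 k)), norm_smul_of_nonneg (hα0 k)]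
      _ ≤ (1 - α k) * ‖x k - qstar‖ + α k * (γ * ‖x k - qstar‖) := by
          gcongr
          · exact hα0 k
          · exact hH _ _
      _ = (1 - (1 - γ) * α k) * ‖x k - qstar‖ := by ring
      _ ≤ Real.exp (-((1 - γ) * α k)) * ‖x k - qstar‖ := by
          gcongr
          exact Real.one_sub_le_exp_neg _
  have bound : ∀ n, ‖x n - qstar‖ ≤
      Real.exp (-((1 - γ) * ∑ k ∈ Finset.range n, α k)) * ‖x 0 - qstar‖ := by
    intro n
    induction n with
    | zero => simp
    | succ n ih =>
      calc ‖x (n + 1) - qstar‖ ≤ Real.exp (-((1 - γ) * α n)) * ‖x n - qstar‖ := step n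
        _ ≤ Real.exp (-((1 - γ) * α n)) *
            (Real.exp (-((1 - γ) * ∑ k ∈ Finset.range n, α k)) * ‖x 0 - qstar‖) := by gcongr
        _ = _ := by
          rw [← mul_assoc, ← Real.exp_add, Finset.sum_range_succ]
          ring_nf
  rw [tendsto_iff_norm_sub_tendsto_zero]
  refine squeeze_zero (fun _ => norm_nonneg _) bound ?_
  have lim := (Real.tendsto_exp_neg_atTop_nhds_zero.comp
    (hdiv.const_mul_atTop (sub_pos.2 hγ1))).mul_const ‖x 0 - qstar‖
  simpa using lim
end

section
/- Any policy μ* ∈ M that maximizes the expected robustness ER over M also maximizes the satisfaction probability p over M, where ER(μ) = ∑_{σ∈S} w_μ(σ) · m(σ) with m(σ) = ∫ x dρ_A(x) for σ ∈ A and m(σ) = ∫ x dρ_B(x) for σ ∉ A, and p(μ) = ∑_{σ∈A} w_μ(σ). (This is the conclusion of Proposition 1 — the policy maximizing expected robustness also maximizes the probability of satisfaction — in the case where all satisfying states share the robustness distribution ρ_A and all violating states share the robustness distribution ρ_B.) -/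
open MeasureTheory

/-!
Write `a` and `b` for the means of `ρA` and `ρB`. Since the weights of a policy sum to one,
`ER μ = p μ * (a - b) + b`. As `ρA` lives on `[0, Rmax]` and `ρB` on `[Rmin, 0)`, one has
`0 ≤ a` and `b < 0` (the latter by `integral_id_neg_of_Ico`), so `ER` is a strictly increasing affine function of `p`
and the two have the same maximizers.
-/

/-- The strict sign needs both almost sure negativity and integrability, the latter coming from
the lower bound `r`; without it the Bochner integral would be the junk value `0`. -/
lemma integral_id_neg_of_Ico (ρ : Measure ℝ) [IsProbabilityMeasure ρ] (r : ℝ)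
    (h : ρ (Set.Ico r 0) = 1) : ∫ x, x ∂ρ < 0 := by
  have hae : ∀ᵐ x ∂ρ, x ∈ Set.Ico r 0 := (mem_ae_iff_prob_eq_one measurableSet_Ico).2 h
  have hint : Integrable (fun x : ℝ => x) ρ :=
    Integrable.of_mem_Icc r 0 aemeasurable_id (hae.mono fun x hx => ⟨hx.1, hx.2.le⟩)
  have hpos : 0 < ∫ x, -x ∂ρ := by
    refine (integral_pos_iff_support_of_nonneg_ae (hae.mono fun x hx => ?_) hint.neg).2 ?_
    · exact neg_nonneg.2 hx.2.le
    · refine lt_of_lt_of_le (h ▸ zero_lt_one : 0 < ρ (Set.Ico r 0)) (measure_mono fun x hx => ?_)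
      exact neg_ne_zero.2 hx.2.ne
  rw [integral_neg] at hpos
  linarith

/-- Conclusion of Proposition 1 in the two-distribution case: a policy `μ*`
maximizing the expected robustness `ER(μ) = ∑_σ w_μ(σ)·m(σ)` (where `m(σ)` is
the mean of `ρ_A` on satisfying states and of `ρ_B` on violating states) also
maximizes the satisfaction probability `p(μ) = ∑_{σ∈A} w_μ(σ)`. -/
theorem stmt_10 {S : Type*} [Fintype S] [DecidableEq S] (A : Finset S)
    (Rmin Rmax : ℝ) (hRmin : Rmin < 0) (hRmax : 0 ≤ Rmax)
    (ρA ρB : Measure ℝ) [IsProbabilityMeasure ρA] [IsProbabilityMeasure ρB]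
    (hρA : ρA (Set.Icc 0 Rmax) = 1) (hρB : ρB (Set.Ico Rmin 0) = 1)
    {M : Type*} (w : M → S → ℝ)
    (hw0 : ∀ μ σ, 0 ≤ w μ σ) (hw1 : ∀ μ, ∑ σ, w μ σ = 1)
    (ER : M → ℝ)
    (hER : ∀ μ, ER μ = ∑ σ, w μ σ * (if σ ∈ A then ∫ x, x ∂ρA else ∫ x, x ∂ρB))
    (p : M → ℝ) (hp : ∀ μ, p μ = ∑ σ ∈ A, w μ σ)
    (μstar : M) (hmax : ∀ μ, ER μ ≤ ER μstar) :
    ∀ μ, p μ ≤ p μstar := by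
  have hA : ∀ᵐ x ∂ρA, x ∈ Set.Icc 0 Rmax := (mem_ae_iff_prob_eq_one measurableSet_Icc).2 hρA
  have ha : 0 ≤ ∫ x, x ∂ρA := integral_nonneg_of_ae (hA.mono fun x hx => hx.1)
  have hb := integral_id_neg_of_Ico ρB Rmin hρB
  have key : ∀ μ, ER μ = p μ * ((∫ x, x ∂ρA) - ∫ x, x ∂ρB) + ∫ x, x ∂ρB := by
    intro μ
    generalize (∫ x, x ∂ρA) = a at *
    generalize (∫ x, x ∂ρB) = b at *
    calc ER μ = ∑ σ, ((if σ ∈ A then w μ σ * (a - b) else 0) + w μ σ * b) := by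
          rw [hER]
          refine Finset.sum_congr rfl fun σ _ => ?_
          split_ifs <;> ring
      _ = p μ * (a - b) + b := by
          rw [Finset.sum_add_distrib, ← Finset.sum_mul, hw1, one_mul, hp, Finset.sum_mul,
            Finset.sum_ite_mem, Finset.univ_inter]
  intro μ
  have h := hmax μ
  rw [key, key] at h
  refine le_of_mul_le_mul_right (le_of_add_le_add_right h) ?_
  linarith
end
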